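/- For the Hamiltonian H = H_in + H_clock + H_prop₁ + H_prop₂ + H_out on 3 qubits (with the terms as defined for input x=0 and gate D(π/8)), the expectation ⟨ψ_{x=0}| H |ψ_{x=0}⟩ = sin²(π/8)/3 ≈ 0.0488. -/

import Mathlib

open Matrix
open scoped Kronecker

def pauliX : Matrix (Fin 2) (Fin 2) ℂ := !![0, 1; 1, 0]
def pauliZ : Matrix (Fin 2) (Fin 2) ℂ := !![1, 0; 0, -1]
def proj0 : Matrix (Fin 2) (Fin 2) ℂ := !![1, 0; 0, 0]
def proj1 : Matrix (Fin 2) (Fin 2) ℂ := !![0, 0; 0, 1]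

noncomputable def Dgate (φ : ℝ) : Matrix (Fin 2) (Fin 2) ℂ :=
  (Real.cos φ : ℂ) • pauliZ + (Real.sin φ : ℂ) • pauliX

def ket0 : Fin 2 → ℂ := ![1, 0]
def ket1 : Fin 2 → ℂ := ![0, 1]

/-- Tensor product of three single-qubit vectors. -/
def tens3 (a b c : Fin 2 → ℂ) : Fin 2 × Fin 2 × Fin 2 → ℂ :=
  fun p => a p.1 * (b p.2.1 * c p.2.2)

/-- The history state `|ψ_{x=0}⟩`. -/
noncomputable def ψhist : Fin 2 × Fin 2 × Fin 2 → ℂ :=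
  ((1 / Real.sqrt 3 : ℝ) : ℂ) •
    (tens3 ket0 ket0 ket0 + tens3 ket1 ket1 ket0 +
      tens3 ((Real.sin (Real.pi / 8) : ℂ) • ket0 - (Real.cos (Real.pi / 8) : ℂ) • ket1)
        ket1 ket1)

noncomputable def Hin : Matrix (Fin 2 × Fin 2 × Fin 2) (Fin 2 × Fin 2 × Fin 2) ℂ :=
  (1 - proj0) ⊗ₖ (proj0 ⊗ₖ (1 : Matrix (Fin 2) (Fin 2) ℂ))

noncomputable def Hclock : Matrix (Fin 2 × Fin 2 × Fin 2) (Fin 2 × Fin 2 × Fin 2) ℂ :=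
  (1 : Matrix (Fin 2) (Fin 2) ℂ) ⊗ₖ (proj0 ⊗ₖ proj1)

noncomputable def Hprop1 : Matrix (Fin 2 × Fin 2 × Fin 2) (Fin 2 × Fin 2 × Fin 2) ℂ :=
  (1 / 2 : ℂ) •
    ((1 : Matrix (Fin 2) (Fin 2) ℂ) ⊗ₖ (proj0 ⊗ₖ (1 : Matrix (Fin 2) (Fin 2) ℂ))
      - pauliX ⊗ₖ (pauliX ⊗ₖ (1 : Matrix (Fin 2) (Fin 2) ℂ))
      + (1 : Matrix (Fin 2) (Fin 2) ℂ) ⊗ₖ (proj1 ⊗ₖ proj0))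

noncomputable def Hprop2 : Matrix (Fin 2 × Fin 2 × Fin 2) (Fin 2 × Fin 2 × Fin 2) ℂ :=
  (1 / 2 : ℂ) •
    ((1 : Matrix (Fin 2) (Fin 2) ℂ) ⊗ₖ ((1 : Matrix (Fin 2) (Fin 2) ℂ) ⊗ₖ proj1)
      - Dgate (Real.pi / 8) ⊗ₖ ((1 : Matrix (Fin 2) (Fin 2) ℂ) ⊗ₖ pauliX)
      + (1 : Matrix (Fin 2) (Fin 2) ℂ) ⊗ₖ (proj1 ⊗ₖ proj0))

noncomputable def Hout : Matrix (Fin 2 × Fin 2 × Fin 2) (Fin 2 × Fin 2 × Fin 2) ℂ :=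
  proj0 ⊗ₖ ((1 : Matrix (Fin 2) (Fin 2) ℂ) ⊗ₖ proj1)

/-!
The clock states `00`, `10`, `11` of the history state are orthogonal to the illegal state `01`,
and each energy term can be read off from its action on the history state. `H_clock` annihilates
it. The factor `X` in the propagation terms is not controlled by the other clock qubit, so they do
not annihilate it: on the clock values that a gate connects they cancel because the gate is an
involution, and what is left lies over `01`, so its overlap with the history state vanishes.
`H_in` sees only the initial qubit and `H_out` only the final one, each with weight `1 / 3`; for the
gates `X` and `D(π/8)` applied to `|0⟩` the input is correct and the final amplitude of `|0⟩` is
`sin (π/8)`.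
-/

lemma kronecker_mulVec_tens3 (A B C : Matrix (Fin 2) (Fin 2) ℂ) (a b c : Fin 2 → ℂ) :
    (A ⊗ₖ (B ⊗ₖ C)) *ᵥ tens3 a b c = tens3 (A *ᵥ a) (B *ᵥ b) (C *ᵥ c) := by
  ext ⟨i, j, k⟩
  simp only [mulVec, dotProduct, tens3, kronecker_apply, Fintype.sum_prod_type,
    Fin.sum_univ_two]
  ring

lemma star_tens3_dotProduct_tens3 (a b c a' b' c' : Fin 2 → ℂ) :
    star (tens3 a b c) ⬝ᵥ tens3 a' b' c' =
      (star a ⬝ᵥ a') * ((star b ⬝ᵥ b') * (star c ⬝ᵥ c')) := by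
  simp only [dotProduct, Pi.star_apply, tens3, star_mul', Fintype.sum_prod_type,
    Fin.sum_univ_two]
  ring

lemma tens3_zero_middle (a c : Fin 2 → ℂ) : tens3 a 0 c = 0 := by
  ext; simp [tens3]

lemma tens3_zero_right (a b : Fin 2 → ℂ) : tens3 a b 0 = 0 := by
  ext; simp [tens3]

lemma proj0_mulVec_ket0 : proj0 *ᵥ ket0 = ket0 := by
  ext i; fin_cases i <;> simp [proj0, ket0]

lemma proj0_mulVec_ket1 : proj0 *ᵥ ket1 = 0 := by
  ext i; fin_cases i <;> simp [proj0, ket1]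

lemma proj1_mulVec_ket0 : proj1 *ᵥ ket0 = 0 := by
  ext i; fin_cases i <;> simp [proj1, ket0]

lemma proj1_mulVec_ket1 : proj1 *ᵥ ket1 = ket1 := by
  ext i; fin_cases i <;> simp [proj1, ket1]

lemma pauliX_mulVec_ket0 : pauliX *ᵥ ket0 = ket1 := by
  ext i; fin_cases i <;> simp [pauliX, ket0, ket1]

lemma pauliX_mulVec_ket1 : pauliX *ᵥ ket1 = ket0 := by
  ext i; fin_cases i <;> simp [pauliX, ket0, ket1]

lemma star_ket0_dotProduct_ket0 : star ket0 ⬝ᵥ ket0 = 1 := by simp [dotProduct, ket0]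

lemma star_ket0_dotProduct_ket1 : star ket0 ⬝ᵥ ket1 = 0 := by simp [dotProduct, ket0, ket1]

lemma star_ket1_dotProduct_ket0 : star ket1 ⬝ᵥ ket0 = 0 := by simp [dotProduct, ket0, ket1]

lemma star_ket1_dotProduct_ket1 : star ket1 ⬝ᵥ ket1 = 1 := by simp [dotProduct, ket1]

lemma one_sub_proj0 : 1 - proj0 = proj1 := by
  ext i j; fin_cases i <;> fin_cases j <;> simp [proj0, proj1]

lemma star_dotProduct_proj0_mulVec (v : Fin 2 → ℂ) :
    star v ⬝ᵥ proj0 *ᵥ v = ((‖v 0‖ ^ 2 : ℝ) : ℂ) := by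
  simp [proj0, dotProduct, mulVec, Complex.conj_mul']

lemma star_dotProduct_proj1_mulVec (v : Fin 2 → ℂ) :
    star v ⬝ᵥ proj1 *ᵥ v = ((‖v 1‖ ^ 2 : ℝ) : ℂ) := by
  simp [proj1, dotProduct, mulVec, Complex.conj_mul']

lemma pauliX_mul_pauliX : pauliX * pauliX = 1 := by simp [pauliX, one_fin_two]

lemma Dgate_eq (φ : ℝ) :
    Dgate φ = !![(Real.cos φ : ℂ), (Real.sin φ : ℂ); (Real.sin φ : ℂ), -(Real.cos φ : ℂ)] := by
  simp [Dgate, pauliX, pauliZ]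

lemma Dgate_mul_Dgate (φ : ℝ) : Dgate φ * Dgate φ = 1 := by
  have sin_sq_add_cos_sq : (Real.sin φ : ℂ) ^ 2 + (Real.cos φ : ℂ) ^ 2 = 1 := by
    exact_mod_cast Real.sin_sq_add_cos_sq φ
  rw [Dgate_eq, mul_fin_two, one_fin_two]
  congrm !![?_, ?_; ?_, ?_]
  · linear_combination sin_sq_add_cos_sq
  · ring
  · ring
  · linear_combination sin_sq_add_cos_sq

lemma Dgate_mulVec_ket1 (φ : ℝ) :
    Dgate φ *ᵥ ket1 = (Real.sin φ : ℂ) • ket0 - (Real.cos φ : ℂ) • ket1 := by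
  ext i; fin_cases i <;> simp [Dgate_eq, ket0, ket1]

lemma norm_sq_Dgate_mulVec_ket1_zero (φ : ℝ) :
    ‖(Dgate φ *ᵥ ket1) 0‖ ^ 2 = Real.sin φ ^ 2 := by
  have amplitude : (Dgate φ *ᵥ ket1) 0 = (Real.sin φ : ℂ) := by
    rw [Dgate_mulVec_ket1]
    simp [ket0, ket1]
  rw [amplitude, Complex.norm_real, Real.norm_eq_abs, sq_abs]

/-- The history state of the circuit that applies the gate `U` and then the gate `V` to a qubit
prepared in `ξ`. Time is encoded in unary on the last two qubits, as `00`, `10`, `11`; the factor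
`1 / √3` normalizes the state when `ξ` is a unit vector and the gates are unitary. -/
noncomputable def historyState (U V : Matrix (Fin 2) (Fin 2) ℂ) (ξ : Fin 2 → ℂ) :
    Fin 2 × Fin 2 × Fin 2 → ℂ :=
  ((1 / Real.sqrt 3 : ℝ) : ℂ) •
    (tens3 ξ ket0 ket0 + tens3 (U *ᵥ ξ) ket1 ket0 + tens3 (V *ᵥ U *ᵥ ξ) ket1 ket1)

/-- The propagation term penalizing a wrong application of the first gate `U`, between the clock
values `00` and `10`. The gate appears with `X` on the clock, in place of `U` and its adjoint with
the raising and lowering operators, because `U` is meant to be Hermitian. -/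
noncomputable def firstPropagation (U : Matrix (Fin 2) (Fin 2) ℂ) :
    Matrix (Fin 2 × Fin 2 × Fin 2) (Fin 2 × Fin 2 × Fin 2) ℂ :=
  (1 / 2 : ℂ) •
    ((1 : Matrix (Fin 2) (Fin 2) ℂ) ⊗ₖ (proj0 ⊗ₖ (1 : Matrix (Fin 2) (Fin 2) ℂ))
      - U ⊗ₖ (pauliX ⊗ₖ (1 : Matrix (Fin 2) (Fin 2) ℂ))
      + (1 : Matrix (Fin 2) (Fin 2) ℂ) ⊗ₖ (proj1 ⊗ₖ proj0))

/-- The propagation term penalizing a wrong application of the second gate `V`, between the clock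
values `10` and `11`; like the first gate, `V` is meant to be Hermitian. -/
noncomputable def secondPropagation (V : Matrix (Fin 2) (Fin 2) ℂ) :
    Matrix (Fin 2 × Fin 2 × Fin 2) (Fin 2 × Fin 2 × Fin 2) ℂ :=
  (1 / 2 : ℂ) •
    ((1 : Matrix (Fin 2) (Fin 2) ℂ) ⊗ₖ ((1 : Matrix (Fin 2) (Fin 2) ℂ) ⊗ₖ proj1)
      - V ⊗ₖ ((1 : Matrix (Fin 2) (Fin 2) ℂ) ⊗ₖ pauliX)
      + (1 : Matrix (Fin 2) (Fin 2) ℂ) ⊗ₖ (proj1 ⊗ₖ proj0))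

section HistoryState

variable (U V : Matrix (Fin 2) (Fin 2) ℂ) (ξ w : Fin 2 → ℂ)

lemma star_historyState_dotProduct_tens3 (b c : Fin 2 → ℂ) :
    star (historyState U V ξ) ⬝ᵥ tens3 w b c =
      ((1 / Real.sqrt 3 : ℝ) : ℂ) *
        ((star ξ ⬝ᵥ w) * ((star ket0 ⬝ᵥ b) * (star ket0 ⬝ᵥ c)) +
          (star (U *ᵥ ξ) ⬝ᵥ w) * ((star ket1 ⬝ᵥ b) * (star ket0 ⬝ᵥ c)) +
          (star (V *ᵥ U *ᵥ ξ) ⬝ᵥ w) * ((star ket1 ⬝ᵥ b) * (star ket1 ⬝ᵥ c))) := by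
  simp only [historyState, star_smul, star_add, smul_dotProduct, add_dotProduct,
    star_tens3_dotProduct_tens3, Complex.star_def, Complex.conj_ofReal, smul_eq_mul]

lemma star_historyState_dotProduct_tens3_ket0_ket0 :
    star (historyState U V ξ) ⬝ᵥ tens3 w ket0 ket0 =
      ((1 / Real.sqrt 3 : ℝ) : ℂ) * (star ξ ⬝ᵥ w) := by
  rw [star_historyState_dotProduct_tens3, star_ket0_dotProduct_ket0, star_ket1_dotProduct_ket0]
  ring

lemma star_historyState_dotProduct_tens3_ket0_ket1 :
    star (historyState U V ξ) ⬝ᵥ tens3 w ket0 ket1 = 0 := by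
  rw [star_historyState_dotProduct_tens3, star_ket0_dotProduct_ket1, star_ket1_dotProduct_ket0]
  ring

lemma star_historyState_dotProduct_tens3_ket1_ket1 :
    star (historyState U V ξ) ⬝ᵥ tens3 w ket1 ket1 =
      ((1 / Real.sqrt 3 : ℝ) : ℂ) * (star (V *ᵥ U *ᵥ ξ) ⬝ᵥ w) := by
  rw [star_historyState_dotProduct_tens3, star_ket0_dotProduct_ket1, star_ket1_dotProduct_ket1]
  ring

lemma Hin_mulVec_historyState :
    Hin *ᵥ historyState U V ξ =
      ((1 / Real.sqrt 3 : ℝ) : ℂ) • tens3 (proj1 *ᵥ ξ) ket0 ket0 := by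
  simp only [Hin, historyState, one_sub_proj0, mulVec_smul, mulVec_add, kronecker_mulVec_tens3,
    one_mulVec, proj0_mulVec_ket0, proj0_mulVec_ket1, tens3_zero_middle, add_zero]

lemma Hclock_mulVec_historyState : Hclock *ᵥ historyState U V ξ = 0 := by
  simp only [Hclock, historyState, mulVec_smul, mulVec_add, kronecker_mulVec_tens3,
    proj0_mulVec_ket1, proj1_mulVec_ket0, tens3_zero_middle, tens3_zero_right, add_zero,
    smul_zero]

lemma Hout_mulVec_historyState :
    Hout *ᵥ historyState U V ξ =
      ((1 / Real.sqrt 3 : ℝ) : ℂ) • tens3 (proj0 *ᵥ V *ᵥ U *ᵥ ξ) ket1 ket1 := by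
  simp only [Hout, historyState, mulVec_smul, mulVec_add, kronecker_mulVec_tens3, one_mulVec,
    proj1_mulVec_ket0, proj1_mulVec_ket1, tens3_zero_right, add_zero, zero_add]

lemma one_div_sqrt_three_mul_self :
    ((1 / Real.sqrt 3 : ℝ) : ℂ) * ((1 / Real.sqrt 3 : ℝ) : ℂ) = 1 / 3 := by
  rw [← Complex.ofReal_mul, div_mul_div_comm, Real.mul_self_sqrt zero_le_three]
  norm_num

lemma Hin_energy_historyState :
    star (historyState U V ξ) ⬝ᵥ Hin *ᵥ historyState U V ξ = ((‖ξ 1‖ ^ 2 / 3 : ℝ) : ℂ) := by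
  rw [Hin_mulVec_historyState, dotProduct_smul, star_historyState_dotProduct_tens3_ket0_ket0,
    star_dotProduct_proj1_mulVec, smul_eq_mul, ← mul_assoc, one_div_sqrt_three_mul_self]
  push_cast
  ring

lemma Hout_energy_historyState :
    star (historyState U V ξ) ⬝ᵥ Hout *ᵥ historyState U V ξ =
      ((‖(V *ᵥ U *ᵥ ξ) 0‖ ^ 2 / 3 : ℝ) : ℂ) := by
  rw [Hout_mulVec_historyState, dotProduct_smul, star_historyState_dotProduct_tens3_ket1_ket1,
    star_dotProduct_proj0_mulVec, smul_eq_mul, ← mul_assoc, one_div_sqrt_three_mul_self]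
  push_cast
  ring

variable {U V}

lemma firstPropagation_mulVec_historyState (hU : U * U = 1) :
    firstPropagation U *ᵥ historyState U V ξ =
      -((1 / 2 : ℂ) • ((1 / Real.sqrt 3 : ℝ) : ℂ) • tens3 (U *ᵥ V *ᵥ U *ᵥ ξ) ket0 ket1) := by
  have U_mulVec_U_mulVec : U *ᵥ U *ᵥ ξ = ξ := by rw [mulVec_mulVec, hU, one_mulVec]
  simp only [firstPropagation, historyState, mulVec_smul, smul_mulVec, mulVec_add, add_mulVec,
    sub_mulVec, kronecker_mulVec_tens3, U_mulVec_U_mulVec, one_mulVec, proj0_mulVec_ket0,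
    proj0_mulVec_ket1, proj1_mulVec_ket0, proj1_mulVec_ket1, pauliX_mulVec_ket0,
    pauliX_mulVec_ket1, tens3_zero_middle, tens3_zero_right]
  module

lemma secondPropagation_mulVec_historyState (hV : V * V = 1) :
    secondPropagation V *ᵥ historyState U V ξ =
      -((1 / 2 : ℂ) • ((1 / Real.sqrt 3 : ℝ) : ℂ) • tens3 (V *ᵥ ξ) ket0 ket1) := by
  have V_mulVec_V_mulVec : V *ᵥ V *ᵥ U *ᵥ ξ = U *ᵥ ξ := by
    rw [mulVec_mulVec, hV, one_mulVec]
  simp only [secondPropagation, historyState, mulVec_smul, smul_mulVec, mulVec_add, add_mulVec,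
    sub_mulVec, kronecker_mulVec_tens3, V_mulVec_V_mulVec, one_mulVec, proj0_mulVec_ket1,
    proj0_mulVec_ket0, proj1_mulVec_ket0, proj1_mulVec_ket1, pauliX_mulVec_ket0,
    pauliX_mulVec_ket1, tens3_zero_middle, tens3_zero_right]
  module

lemma firstPropagation_energy_historyState (hU : U * U = 1) :
    star (historyState U V ξ) ⬝ᵥ firstPropagation U *ᵥ historyState U V ξ = 0 := by
  rw [firstPropagation_mulVec_historyState ξ hU, dotProduct_neg, dotProduct_smul,
    dotProduct_smul, star_historyState_dotProduct_tens3_ket0_ket1, smul_zero, smul_zero, neg_zero]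

lemma secondPropagation_energy_historyState (hV : V * V = 1) :
    star (historyState U V ξ) ⬝ᵥ secondPropagation V *ᵥ historyState U V ξ = 0 := by
  rw [secondPropagation_mulVec_historyState ξ hV, dotProduct_neg, dotProduct_smul,
    dotProduct_smul, star_historyState_dotProduct_tens3_ket0_ket1, smul_zero, smul_zero, neg_zero]

theorem history_state_energy_general (hU : U * U = 1) (hV : V * V = 1) :
    star (historyState U V ξ) ⬝ᵥ
        (Hin + Hclock + firstPropagation U + secondPropagation V + Hout) *ᵥ historyState U V ξ
      = (((‖ξ 1‖ ^ 2 + ‖(V *ᵥ U *ᵥ ξ) 0‖ ^ 2) / 3 : ℝ) : ℂ) := by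
  simp only [add_mulVec, dotProduct_add, Hin_energy_historyState, Hclock_mulVec_historyState,
    firstPropagation_energy_historyState ξ hU, secondPropagation_energy_historyState ξ hV,
    Hout_energy_historyState, add_zero]
  rw [← Complex.ofReal_add, add_div]

end HistoryState

lemma ψhist_eq_historyState : ψhist = historyState pauliX (Dgate (Real.pi / 8)) ket0 := by
  rw [historyState, pauliX_mulVec_ket0, Dgate_mulVec_ket1, ψhist]

lemma Hprop1_eq_firstPropagation : Hprop1 = firstPropagation pauliX := rfl

lemma Hprop2_eq_secondPropagation : Hprop2 = secondPropagation (Dgate (Real.pi / 8)) := rfl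

lemma norm_sq_ket0_one : ‖ket0 1‖ ^ 2 = 0 := by simp [ket0]

/-- The expectation of the full Hamiltonian
`H = H_in + H_clock + H_prop₁ + H_prop₂ + H_out` in the history state equals
`sin²(π/8)/3 ≈ 0.0488`. -/
theorem history_state_energy :
    star ψhist ⬝ᵥ (Hin + Hclock + Hprop1 + Hprop2 + Hout).mulVec ψhist
      = ((Real.sin (Real.pi / 8) ^ 2 / 3 : ℝ) : ℂ) := by
  rw [ψhist_eq_historyState, Hprop1_eq_firstPropagation, Hprop2_eq_secondPropagation,
    history_state_energy_general _ pauliX_mul_pauliX (Dgate_mul_Dgate _), pauliX_mulVec_ket0,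
    norm_sq_Dgate_mulVec_ket1_zero, norm_sq_ket0_one, zero_add]
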